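/- arXiv:1602.01894 — 3 statements merged into one kernel-verified Lean document; each statement's English description precedes it below -/
import Mathlib

section
/- Let a₄ and a₆ be integers with 4a₄³ + 27a₆² ≠ 0. Then the following are equivalent: (1) there exist integers a₄′, a₆′ and a nonzero rational number u such that a₄ = u⁴·a₄′ and a₆ = u⁶·a₆′ and max(4|a₄′|³, 27a₆′²) < max(4|a₄|³, 27a₆²); (2) there exists a prime p such that p⁴ divides a₄ and p⁶ divides a₆. -/
/-!
The naive height is homogeneous: replacing `(b, c)` by `(k⁴b, k⁶c)` multiplies it by `k¹²`
(`naiveHeight_scale`). So dividing out `p⁴` and `p⁶` strictly lowers the (positive) height.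

Conversely, write `u = n / d` in lowest terms. Clearing denominators in `a = u ^ k * a'` and using
coprimality gives `n ^ k ∣ a`. If `n` is not a unit, any prime factor of `n` is the required `p`.
If `n = ±1`, then `(a₄', a₆') = (d⁴a₄, d⁶a₆)`, whose height is at least that of `(a₄, a₆)`.
-/

theorem naiveHeight_scale (k b c : ℤ) :
    max (4 * |k ^ 4 * b| ^ 3) (27 * (k ^ 6 * c) ^ 2) =
      k ^ 12 * max (4 * |b| ^ 3) (27 * c ^ 2) := by
  have hk : (0 : ℤ) ≤ k ^ 12 := Even.pow_nonneg (by decide) k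
  have hk4 : |k ^ 4| = k ^ 4 := abs_of_nonneg (Even.pow_nonneg (by decide) k)
  rw [mul_max_of_nonneg _ _ hk, abs_mul, hk4]
  congr 1 <;> ring

theorem clear_denominators {a a' : ℤ} {u : ℚ} {k : ℕ} (h : (a : ℚ) = u ^ k * (a' : ℚ)) :
    (u.den : ℤ) ^ k * a = u.num ^ k * a' := by
  have hd : (u.den : ℚ) ≠ 0 := by exact_mod_cast u.den_nz
  have h2 : (u.den : ℚ) ^ k * a = (u.num : ℚ) ^ k * a' := by
    rw [h, ← mul_assoc, ← mul_pow, Rat.den_mul_eq_num]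
  exact_mod_cast h2

theorem num_pow_dvd {a a' : ℤ} {u : ℚ} {k : ℕ} (h : (a : ℚ) = u ^ k * (a' : ℚ)) :
    u.num ^ k ∣ a := by
  have hc : IsCoprime u.num (u.den : ℤ) := Rat.isCoprime_num_den u
  exact (hc.pow (m := k) (n := k)).dvd_of_dvd_mul_left ⟨a', clear_denominators h⟩

/-- An integral short Weierstrass curve `y² = x³ + a₄x + a₆` is isomorphic over `ℚ`
(via `a₄ = u⁴a₄′`, `a₆ = u⁶a₆′` for nonzero rational `u`) to an integral curve of
strictly smaller naive height `max(4|a₄|³, 27a₆²)` if and only if there is a prime `p`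
with `p⁴ ∣ a₄` and `p⁶ ∣ a₆`. -/
theorem smaller_height_iff_prime_power_divides (a₄ a₆ : ℤ)
    (hΔ : 4 * a₄ ^ 3 + 27 * a₆ ^ 2 ≠ 0) :
    (∃ (a₄' a₆' : ℤ) (u : ℚ), u ≠ 0 ∧
        (a₄ : ℚ) = u ^ 4 * (a₄' : ℚ) ∧ (a₆ : ℚ) = u ^ 6 * (a₆' : ℚ) ∧
        max (4 * |a₄'| ^ 3) (27 * a₆' ^ 2) < max (4 * |a₄| ^ 3) (27 * a₆ ^ 2)) ↔
      ∃ p : ℕ, p.Prime ∧ (p : ℤ) ^ 4 ∣ a₄ ∧ (p : ℤ) ^ 6 ∣ a₆ := by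
  constructor
  · rintro ⟨b, c, u, -, h4, h6, hlt⟩
    by_cases hn : u.num.natAbs = 1
    · exfalso
      have hsq : u.num ^ 2 = 1 := by
        rw [← Int.natAbs_sq, hn]; norm_num
      have e4 := clear_denominators h4
      have e6 := clear_denominators h6
      rw [show u.num ^ 4 = (u.num ^ 2) ^ 2 by ring, hsq, one_pow, one_mul] at e4
      rw [show u.num ^ 6 = (u.num ^ 2) ^ 3 by ring, hsq, one_pow, one_mul] at e6
      rw [← e4, ← e6, naiveHeight_scale] at hlt
      have hd : (1 : ℤ) ≤ (u.den : ℤ) ^ 12 :=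
        one_le_pow₀ (by exact_mod_cast u.den_pos)
      have hH : 0 ≤ max (4 * |a₄| ^ 3) (27 * a₆ ^ 2) := le_max_of_le_right (by positivity)
      nlinarith
    · obtain ⟨p, hp, hpn⟩ := Nat.exists_prime_and_dvd hn
      have hpn' : (p : ℤ) ∣ u.num := Int.natCast_dvd.mpr hpn
      exact ⟨p, hp, (pow_dvd_pow_of_dvd hpn' 4).trans (num_pow_dvd h4),
        (pow_dvd_pow_of_dvd hpn' 6).trans (num_pow_dvd h6)⟩
  · rintro ⟨p, hp, ⟨b, rfl⟩, ⟨c, rfl⟩⟩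
    refine ⟨b, c, p, by exact_mod_cast hp.ne_zero, by push_cast; rfl, by push_cast; rfl, ?_⟩
    rw [naiveHeight_scale]
    have hp12 : (1 : ℤ) < (p : ℤ) ^ 12 :=
      one_lt_pow₀ (by exact_mod_cast hp.one_lt) (by norm_num)
    have hH : 0 < max (4 * |b| ^ 3) (27 * c ^ 2) := by
      by_cases hb : b = 0
      · have hc : c ≠ 0 := by
          rintro rfl
          exact hΔ (by simp [hb])
        exact lt_max_of_lt_right (by positivity)
      · exact lt_max_of_lt_left (by positivity)
    nlinarith
end

section
/- For a real number X ≥ 1, let N(X) be the number of pairs of integers (a₄, a₆) such that max(|a₄|³, a₆²) ≤ X, 4a₄³ + 27a₆² ≠ 0, and there is no prime p with p⁴ ∣ a₄ and p⁶ ∣ a₆. Then N(X)/X^{5/6} tends to 4/ζ(10) as X → ∞, where ζ is the Riemann zeta function. -/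
/-!
Call a pair `(a, b) ≠ (0, 0)` of integers *minimal* if no prime `p` has `p⁴ ∣ a` and `p⁶ ∣ b`.
The `d ≥ 1` with `d⁴ ∣ a` and `d⁶ ∣ b` are closed under least common multiples, so they are exactly
the divisors of the largest of them, and the sum of `μ d` over them is `1` or `0` according to
whether `(a, b)` is minimal (`sum_moebius_scale`). Scaling `(a, b)` to `(d⁴ a, d⁶ b)` multiplies the
height by `d¹²`. So if `T Y` counts the nonzero pairs of height at most `Y`, the minimal pairs of
height at most `X` number `∑ μ d * T (X / d¹²)` (`card_minimal_eq_tsum`).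

Since `T Y` is one less than the number of lattice points in a box with half-sides `Y^(1/3)` and
`Y^(1/2)`, it satisfies `T Y / Y^(5/6) → 4` and `T Y ≤ 9 Y^(5/6)` for all `Y ≥ 0`. Dominated
convergence for the series `∑ μ d d⁻¹⁰ * (T (X / d¹²) / (X / d¹²)^(5/6))` then gives the limit
`4 * ∑ μ d d⁻¹⁰ = 4 / ζ(10)`. Finally, pairs of zero discriminant are negligible: `a` is determined
by `b`, so there are only `O(X^(1/2))` of them.
-/

open Filter Real

/-- `N X` is the number of pairs of integers `(a₄, a₆)` with uncalibrated height
`max(|a₄|³, a₆²) ≤ X`, nonzero discriminant, and no prime `p` with `p⁴ ∣ a₄` and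
`p⁶ ∣ a₆` (i.e. the number of isomorphism classes of elliptic curves over `ℚ` of
uncalibrated height at most `X`). -/
noncomputable def uncalibratedCount (X : ℝ) : ℕ :=
  Set.ncard {p : ℤ × ℤ |
    ((max (|p.1| ^ 3) (p.2 ^ 2) : ℤ) : ℝ) ≤ X ∧
    4 * p.1 ^ 3 + 27 * p.2 ^ 2 ≠ 0 ∧
    ¬∃ q : ℕ, q.Prime ∧ (q : ℤ) ^ 4 ∣ p.1 ∧ (q : ℤ) ^ 6 ∣ p.2}


open ArithmeticFunction Topology
open scoped ArithmeticFunction.Moebius ArithmeticFunction.zeta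

/-- The nonzero integer pairs of uncalibrated height at most `Y`, for `Y ≥ 0` (see `mem_box`). -/
noncomputable def box (Y : ℝ) : Finset (ℤ × ℤ) :=
  (Finset.Icc (-(⌊Y ^ (3 : ℝ)⁻¹⌋₊ : ℤ)) ⌊Y ^ (3 : ℝ)⁻¹⌋₊ ×ˢ
    Finset.Icc (-(⌊Y ^ (2 : ℝ)⁻¹⌋₊ : ℤ)) ⌊Y ^ (2 : ℝ)⁻¹⌋₊).erase 0

/-- The pair `p` arises from an integer pair by scaling with weights `(4, 6)` by `d`. -/
def ScaleDvd (d : ℕ) (p : ℤ × ℤ) : Prop := (d : ℤ) ^ 4 ∣ p.1 ∧ (d : ℤ) ^ 6 ∣ p.2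

/-- No prime scales `p` down. The pair `0` is not minimal. -/
def IsMinimalPair (p : ℤ × ℤ) : Prop := ¬∃ q : ℕ, q.Prime ∧ ScaleDvd q p

/-! ### Counting pairs in a box -/

lemma abs_le_floor_iff {Y : ℝ} (hY : 0 ≤ Y) (k : ℕ) (hk : k ≠ 0) (a : ℤ) :
    a ∈ Finset.Icc (-(⌊Y ^ (k : ℝ)⁻¹⌋₊ : ℤ)) ⌊Y ^ (k : ℝ)⁻¹⌋₊ ↔ |(a : ℝ)| ^ k ≤ Y := by
  rw [Finset.mem_Icc, ← abs_le, Int.abs_eq_natAbs, Nat.cast_le, Nat.le_floor_iff (by positivity),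
    Real.le_rpow_inv_iff_of_pos (by positivity) hY (by positivity), Real.rpow_natCast,
    Nat.cast_natAbs, Int.cast_abs]

lemma mem_box {Y : ℝ} (hY : 0 ≤ Y) (p : ℤ × ℤ) :
    p ∈ box Y ↔ p ≠ 0 ∧ |(p.1 : ℝ)| ^ 3 ≤ Y ∧ (p.2 : ℝ) ^ 2 ≤ Y := by
  have h3 := abs_le_floor_iff hY 3 (by norm_num) p.1
  have h2 := abs_le_floor_iff hY 2 (by norm_num) p.2
  rw [sq_abs] at h2
  rw [box, Finset.mem_erase, Finset.mem_product]
  exact and_congr_right fun _ => and_congr h3 h2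

lemma card_box (Y : ℝ) :
    ((box Y).card : ℝ) = (2 * ⌊Y ^ (3 : ℝ)⁻¹⌋₊ + 1) * (2 * ⌊Y ^ (2 : ℝ)⁻¹⌋₊ + 1) - 1 := by
  have hc : ∀ n : ℕ, (Finset.Icc (-(n : ℤ)) n).card = 2 * n + 1 := fun n => by
    rw [Int.card_Icc]; omega
  rw [box, Finset.card_erase_of_mem (by simp), Finset.card_product, hc, hc,
    Nat.cast_sub (Nat.one_le_iff_ne_zero.2 (by positivity))]
  push_cast
  ring

lemma box_eq_empty {Y : ℝ} (hY : 0 ≤ Y) (h1 : Y < 1) : box Y = ∅ := by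
  have h0 : ∀ k : ℝ, 0 < k → ⌊Y ^ k⌋₊ = 0 := fun k hk =>
    Nat.floor_eq_zero.2 (Real.rpow_lt_one hY h1 hk)
  have := card_box Y
  rw [h0 _ (by norm_num), h0 _ (by norm_num)] at this
  norm_num at this
  exact this

lemma rpow_split {Y : ℝ} (hY : 0 ≤ Y) :
    Y ^ (3 : ℝ)⁻¹ * Y ^ (2 : ℝ)⁻¹ = Y ^ ((5 : ℝ) / 6) := by
  rw [← Real.rpow_add_of_nonneg hY (by norm_num) (by norm_num)]
  norm_num

lemma card_box_le {Y : ℝ} (hY : 0 ≤ Y) : ((box Y).card : ℝ) ≤ 9 * Y ^ ((5 : ℝ) / 6) := by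
  rcases lt_or_ge Y 1 with h1 | h1
  · rw [box_eq_empty hY h1]
    simp only [Finset.card_empty, Nat.cast_zero]
    positivity
  · have hb : ∀ k : ℝ, 0 < k → (2 * ⌊Y ^ k⌋₊ + 1 : ℝ) ≤ 3 * Y ^ k := fun k hk => by
      have := Nat.floor_le (Real.rpow_nonneg hY k)
      have := Real.one_le_rpow h1 hk.le
      linarith
    rw [card_box, ← rpow_split hY]
    have := mul_le_mul (hb (3 : ℝ)⁻¹ (by norm_num)) (hb (2 : ℝ)⁻¹ (by norm_num)) (by positivity)
      (by positivity)
    linarith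

lemma tendsto_card_box :
    Tendsto (fun Y : ℝ => ((box Y).card : ℝ) / Y ^ ((5 : ℝ) / 6)) atTop (𝓝 4) := by
  have hs : ∀ k : ℝ, 0 < k →
      Tendsto (fun Y : ℝ => (2 * ⌊Y ^ k⌋₊ + 1 : ℝ) / Y ^ k) atTop (𝓝 2) := fun k hk => by
    have h1 : Tendsto (fun u : ℝ => 2 * ((⌊u⌋₊ : ℝ) / u) + u⁻¹) atTop (𝓝 (2 * 1 + 0)) :=
      (tendsto_nat_floor_div_atTop.const_mul 2).add tendsto_inv_atTop_zero
    norm_num at h1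
    refine (h1.comp (tendsto_rpow_atTop hk)).congr fun Y => ?_
    simp only [Function.comp]
    ring_nf
  have h := ((hs (3 : ℝ)⁻¹ (by norm_num)).mul (hs (2 : ℝ)⁻¹ (by norm_num))).sub
    ((tendsto_rpow_atTop (show (0 : ℝ) < 5 / 6 by norm_num)).inv_tendsto_atTop)
  norm_num only at h
  refine h.congr' ?_
  filter_upwards [eventually_ge_atTop 0] with Y hY
  rw [card_box, ← rpow_split hY]
  simp only [Pi.inv_apply, ← rpow_split hY]
  ring_nf

/-! ### Möbius inversion over the scaling factor -/

/-- Multiplication by `d` with weights `(4, 6)` identifies the pairs of height at most `X / d ^ 12`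
with those of height at most `X` that `d` scales down. -/
lemma card_filter_scaleDvd {X : ℝ} (hX : 0 ≤ X) {d : ℕ} (hd : d ≠ 0)
    [DecidablePred (ScaleDvd d)] :
    ((box X).filter (ScaleDvd d)).card = (box (X / (d : ℝ) ^ 12)).card := by
  symm
  have hd' : (0 : ℝ) < d := by positivity
  have hdz : (d : ℤ) ≠ 0 := by exact_mod_cast hd
  have key : ∀ a b : ℤ, ((d : ℤ) ^ 4 * a, (d : ℤ) ^ 6 * b) ∈ box X ↔
      (a, b) ∈ box (X / (d : ℝ) ^ 12) := fun a b => by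
    rw [mem_box hX, mem_box (by positivity), le_div_iff₀ (by positivity),
      le_div_iff₀ (by positivity)]
    simp only [Prod.mk_eq_zero, ne_eq, mul_eq_zero, pow_ne_zero _ hdz, false_or]
    push_cast
    rw [abs_mul, abs_of_nonneg (by positivity : (0 : ℝ) ≤ (d : ℝ) ^ 4)]
    ring_nf
  refine Finset.card_bij (fun p _ => ((d : ℤ) ^ 4 * p.1, (d : ℤ) ^ 6 * p.2)) ?_ ?_ ?_
  · rintro ⟨a, b⟩ h
    exact Finset.mem_filter.2 ⟨(key a b).2 h, dvd_mul_right _ _, dvd_mul_right _ _⟩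
  · rintro ⟨a, b⟩ - ⟨a', b'⟩ - h
    simpa [hd] using h
  · rintro ⟨a, b⟩ h
    obtain ⟨h, ⟨a', rfl⟩, ⟨b', rfl⟩⟩ := Finset.mem_filter.1 h
    exact ⟨(a', b'), (key a' b').1 h, rfl⟩

lemma scaleDvd_iff (d : ℕ) (p : ℤ × ℤ) :
    ScaleDvd d p ↔ d ^ 4 ∣ p.1.natAbs ∧ d ^ 6 ∣ p.2.natAbs := by
  simp only [ScaleDvd, ← Int.natCast_dvd, Nat.cast_pow]

lemma ScaleDvd.mono {d e : ℕ} {p : ℤ × ℤ} (h : ScaleDvd d p) (hed : e ∣ d) : ScaleDvd e p := by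
  have : (e : ℤ) ∣ d := by exact_mod_cast hed
  exact ⟨(pow_dvd_pow_of_dvd this 4).trans h.1, (pow_dvd_pow_of_dvd this 6).trans h.2⟩

lemma ScaleDvd.lcm {d e : ℕ} {p : ℤ × ℤ} (hd : ScaleDvd d p) (he : ScaleDvd e p) :
    ScaleDvd (d.lcm e) p := by
  rw [scaleDvd_iff] at *
  rw [← Nat.pow_lcm_pow, ← Nat.pow_lcm_pow]
  exact ⟨Nat.lcm_dvd hd.1 he.1, Nat.lcm_dvd hd.2 he.2⟩

/-- Some nonzero pair has height at most `X / d ^ 12`, which forces `d ^ 12 ≤ X`. -/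
lemma ScaleDvd.le {d : ℕ} {X : ℝ} (hX : 0 ≤ X) {p : ℤ × ℤ} (hp : p ∈ box X)
    (h : ScaleDvd d p) : d ≤ ⌊X⌋₊ := by
  rcases Nat.eq_zero_or_pos d with rfl | hd
  · exact Nat.zero_le _
  classical
  have hm : p ∈ (box X).filter (ScaleDvd d) := Finset.mem_filter.2 ⟨hp, h⟩
  have hc := Finset.card_pos.2 ⟨p, hm⟩
  rw [card_filter_scaleDvd hX hd.ne'] at hc
  have h1 : 1 ≤ X / (d : ℝ) ^ 12 := by
    by_contra! hlt
    rw [box_eq_empty (by positivity) hlt] at hc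
    simp at hc
  rw [one_le_div (by positivity)] at h1
  refine Nat.le_floor (le_trans ?_ h1)
  exact le_self_pow₀ (by exact_mod_cast hd) (by norm_num)

/-- Möbius detection of minimality: the `d` that scale `p` down are the divisors of the largest
such `d`. -/
lemma sum_moebius_scale {X : ℝ} (hX : 0 ≤ X) {p : ℤ × ℤ} (hp : p ∈ box X)
    [DecidablePred fun d => ScaleDvd d p] [Decidable (IsMinimalPair p)] :
    ∑ d ∈ (Finset.Icc 1 ⌊X⌋₊).filter (fun d => ScaleDvd d p), (μ d : ℤ) =
      if IsMinimalPair p then 1 else 0 := by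
  set S := (Finset.Icc 1 ⌊X⌋₊).filter (fun d => ScaleDvd d p) with hS
  have memS : ∀ d, d ∈ S ↔ d ≠ 0 ∧ ScaleDvd d p := fun d => by
    rw [hS, Finset.mem_filter, Finset.mem_Icc, Nat.one_le_iff_ne_zero]
    exact ⟨fun h => ⟨h.1.1, h.2⟩, fun h => ⟨⟨h.1, h.2.le hX hp⟩, h.2⟩⟩
  have h1S : 1 ∈ S := (memS 1).2 ⟨one_ne_zero, by simp [ScaleDvd]⟩
  obtain ⟨D, hDS, hmax⟩ := S.exists_max_image id ⟨1, h1S⟩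
  have hD := (memS D).1 hDS
  have hSD : S = D.divisors := by
    ext d
    rw [Nat.mem_divisors]
    refine ⟨fun h => ⟨?_, hD.1⟩, fun h => (memS d).2 ⟨ne_zero_of_dvd_ne_zero hD.1 h.1,
      hD.2.mono h.1⟩⟩
    have hd := (memS d).1 h
    have hl : d.lcm D ∈ S := (memS _).2 ⟨Nat.lcm_ne_zero hd.1 hD.1, hd.2.lcm hD.2⟩
    have hle : d.lcm D ≤ D := hmax _ hl
    have : d.lcm D = D :=
      le_antisymm hle (Nat.le_of_dvd (Nat.pos_of_ne_zero (Nat.lcm_ne_zero hd.1 hD.1))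
        (Nat.dvd_lcm_right d D))
    exact this ▸ Nat.dvd_lcm_left d D
  have hmin : IsMinimalPair p ↔ D = 1 := by
    constructor
    · intro h
      by_contra hne
      obtain ⟨q, hq, hqD⟩ := Nat.exists_prime_and_dvd hne
      exact h ⟨q, hq, hD.2.mono hqD⟩
    · rintro rfl ⟨q, hq, hqp⟩
      exact absurd (hmax q ((memS q).2 ⟨hq.ne_zero, hqp⟩)) (not_le.2 hq.one_lt)
  rw [hSD, ← coe_mul_zeta_apply, moebius_mul_coe_zeta, one_apply]
  simp only [hmin]

lemma card_minimal_eq_tsum {X : ℝ} (hX : 0 ≤ X) [DecidablePred IsMinimalPair] :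
    (((box X).filter IsMinimalPair).card : ℝ) =
      ∑' d : ℕ, (μ d : ℝ) * (box (X / (d : ℝ) ^ 12)).card := by
  classical
  rw [tsum_eq_sum (s := Finset.Icc 1 ⌊X⌋₊)]
  · have h : (((box X).filter IsMinimalPair).card : ℤ) =
        ∑ d ∈ Finset.Icc 1 ⌊X⌋₊, μ d * ((box (X / (d : ℝ) ^ 12)).card : ℤ) := by
      rw [Finset.card_filter]
      push_cast
      rw [Finset.sum_congr rfl fun p hp => (sum_moebius_scale hX hp).symm]
      simp_rw [Finset.sum_filter]
      rw [Finset.sum_comm]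
      refine Finset.sum_congr rfl fun d hd => ?_
      rw [← card_filter_scaleDvd hX (Nat.one_le_iff_ne_zero.1 (Finset.mem_Icc.1 hd).1),
        Finset.card_filter]
      push_cast
      rw [Finset.mul_sum]
      exact Finset.sum_congr rfl fun p _ => by split_ifs <;> simp
    exact_mod_cast h
  · intro d hd
    rcases Nat.eq_zero_or_pos d with rfl | hd0
    · simp
    have hlt : ⌊X⌋₊ < d := by
      by_contra! hle
      exact hd (Finset.mem_Icc.2 ⟨hd0, hle⟩)
    have hXd : X < (d : ℝ) ^ 12 := ((Nat.floor_lt hX).1 hlt).trans_le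
      (le_self_pow₀ (by exact_mod_cast hd0) (by norm_num))
    rw [box_eq_empty (by positivity) ((div_lt_one (by positivity)).2 hXd)]
    simp

/-! ### The main term -/

lemma tsum_moebius_div_pow_ten :
    ∑' d : ℕ, (μ d : ℝ) / (d : ℝ) ^ 10 = 1 / ∑' n : ℕ, 1 / ((n : ℝ) + 1) ^ 10 := by
  have h10 : (1 : ℝ) < (10 : ℂ).re := by norm_num
  have h := LSeries_zeta_mul_Lseries_moebius h10
  rw [LSeries_zeta_eq_riemannZeta h10, zeta_eq_tsum_one_div_nat_add_one_cpow h10] at h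
  have hμ : LSeries (fun n => ((μ n : ℤ) : ℂ)) 10 =
      ((∑' d : ℕ, (μ d : ℝ) / (d : ℝ) ^ 10 : ℝ) : ℂ) := by
    rw [LSeries, Complex.ofReal_tsum]
    refine tsum_congr fun n => ?_
    rw [LSeries.term_def]
    split_ifs with hn
    · simp [hn]
    · rw [show (10 : ℂ) = ((10 : ℕ) : ℂ) by norm_num, Complex.cpow_natCast]
      push_cast
      rfl
  have hζ : ∑' n : ℕ, 1 / ((n : ℂ) + 1) ^ (10 : ℂ) =
      ((∑' n : ℕ, 1 / ((n : ℝ) + 1) ^ 10 : ℝ) : ℂ) := by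
    rw [Complex.ofReal_tsum]
    refine tsum_congr fun n => ?_
    rw [show (10 : ℂ) = ((10 : ℕ) : ℂ) by norm_num, Complex.cpow_natCast]
    push_cast
    rfl
  rw [hμ, hζ, ← Complex.ofReal_mul] at h
  have h' : (∑' n : ℕ, 1 / ((n : ℝ) + 1) ^ 10) * ∑' d : ℕ, (μ d : ℝ) / (d : ℝ) ^ 10 = 1 := by
    exact_mod_cast h
  exact eq_one_div_of_mul_eq_one_right h'

lemma abs_moebius_cast_le (d : ℕ) : |(μ d : ℝ)| ≤ 1 := by
  exact_mod_cast abs_moebius_le_one (n := d)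

lemma tendsto_card_minimal [DecidablePred IsMinimalPair] :
    Tendsto (fun X : ℝ => (((box X).filter IsMinimalPair).card : ℝ) / X ^ ((5 : ℝ) / 6)) atTop
      (𝓝 (4 / ∑' n : ℕ, 1 / ((n : ℝ) + 1) ^ 10)) := by
  have hlim : 4 / ∑' n : ℕ, 1 / ((n : ℝ) + 1) ^ 10 =
      ∑' d : ℕ, (μ d : ℝ) / (d : ℝ) ^ 10 * 4 := by
    rw [tsum_mul_right, tsum_moebius_div_pow_ten]
    ring
  -- At `d = 0` both sides vanish because `μ 0 = 0`.
  have hterm : ∀ X : ℝ, 0 < X → ∀ d : ℕ,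
      (μ d : ℝ) * (box (X / (d : ℝ) ^ 12)).card / X ^ ((5 : ℝ) / 6) =
        (μ d : ℝ) / (d : ℝ) ^ 10 *
          ((box (X / (d : ℝ) ^ 12)).card / (X / (d : ℝ) ^ 12) ^ ((5 : ℝ) / 6)) := by
    intro X hX d
    rcases Nat.eq_zero_or_pos d with rfl | hd
    · simp
    have hp : ((d : ℝ) ^ 12) ^ ((5 : ℝ) / 6) = (d : ℝ) ^ 10 := by
      rw [← Real.rpow_natCast, ← Real.rpow_mul (by positivity), ← Real.rpow_natCast]
      norm_num
    rw [Real.div_rpow hX.le (by positivity), hp]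
    have : X ^ ((5 : ℝ) / 6) ≠ 0 := by positivity
    field_simp
  have hdom : Tendsto (fun X : ℝ => ∑' d : ℕ, (μ d : ℝ) / (d : ℝ) ^ 10 *
      ((box (X / (d : ℝ) ^ 12)).card / (X / (d : ℝ) ^ 12) ^ ((5 : ℝ) / 6))) atTop
      (𝓝 (∑' d : ℕ, (μ d : ℝ) / (d : ℝ) ^ 10 * 4)) := by
    refine tendsto_tsum_of_dominated_convergence (bound := fun d : ℕ => 1 / (d : ℝ) ^ 10 * 9)
      ((Real.summable_one_div_nat_pow.2 (by norm_num)).mul_right 9) (fun d => ?_) ?_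
    · rcases Nat.eq_zero_or_pos d with rfl | hd
      · simp
      exact (tendsto_card_box.comp
        (tendsto_id.atTop_div_const (by positivity))).const_mul _
    · filter_upwards [eventually_gt_atTop 0] with X hX d
      have h0 : 0 ≤ X / (d : ℝ) ^ 12 := by positivity
      rw [norm_mul, Real.norm_eq_abs, abs_div, Real.norm_eq_abs, abs_of_nonneg
        (by positivity : (0 : ℝ) ≤ (d : ℝ) ^ 10), abs_of_nonneg
        (by positivity : (0 : ℝ) ≤ (box (X / (d : ℝ) ^ 12)).card /
          (X / (d : ℝ) ^ 12) ^ ((5 : ℝ) / 6))]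
      refine mul_le_mul (div_le_div_of_nonneg_right (abs_moebius_cast_le d) (by positivity)) ?_
        (by positivity) (by positivity)
      exact div_le_of_le_mul₀ (by positivity) (by norm_num) (card_box_le h0)
  rw [hlim]
  refine hdom.congr' ?_
  filter_upwards [eventually_gt_atTop 0] with X hX
  rw [card_minimal_eq_tsum hX.le, ← tsum_div_const]
  exact tsum_congr fun d => (hterm X hX d).symm

/-! ### Pairs of zero discriminant -/

/-- On pairs of zero discriminant the second coordinate determines the first. -/
lemma card_disc_zero_le {X : ℝ} (hX : 1 ≤ X) (P : ℤ × ℤ → Prop) [DecidablePred P]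
    (hP : ∀ p, P p → 4 * p.1 ^ 3 + 27 * p.2 ^ 2 = 0) :
    (((box X).filter P).card : ℝ) ≤ 3 * X ^ (2 : ℝ)⁻¹ := by
  have hle : ((box X).filter P).card ≤
      (Finset.Icc (-(⌊X ^ (2 : ℝ)⁻¹⌋₊ : ℤ)) ⌊X ^ (2 : ℝ)⁻¹⌋₊).card := by
    refine Finset.card_le_card_of_injOn Prod.snd ?_ ?_
    · intro p hp
      have := (Finset.mem_filter.1 hp).1
      exact (Finset.mem_product.1 (Finset.mem_of_mem_erase this)).2
    · rintro ⟨a, b⟩ hp ⟨a', b'⟩ hp' (rfl : b = b')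
      have h1 := hP _ (Finset.mem_filter.1 hp).2
      have h2 := hP _ (Finset.mem_filter.1 hp').2
      have h3 : a ^ 3 = a' ^ 3 := by simp only at h1 h2; linarith
      rw [(Odd.strictMono_pow (by decide : Odd 3)).injective h3]
  have hc : (Finset.Icc (-(⌊X ^ (2 : ℝ)⁻¹⌋₊ : ℤ)) ⌊X ^ (2 : ℝ)⁻¹⌋₊).card =
      2 * ⌊X ^ (2 : ℝ)⁻¹⌋₊ + 1 := by
    rw [Int.card_Icc]; omega
  rw [hc] at hle
  have hle' : (((box X).filter P).card : ℝ) ≤ 2 * ⌊X ^ (2 : ℝ)⁻¹⌋₊ + 1 := by exact_mod_cast hle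
  have := Nat.floor_le (Real.rpow_nonneg (zero_le_one.trans hX) (2 : ℝ)⁻¹)
  have := Real.one_le_rpow hX (by norm_num : (0 : ℝ) ≤ (2 : ℝ)⁻¹)
  linarith

lemma tendsto_card_disc_zero (P : ℤ × ℤ → Prop) [DecidablePred P]
    (hP : ∀ p, P p → 4 * p.1 ^ 3 + 27 * p.2 ^ 2 = 0) :
    Tendsto (fun X : ℝ => (((box X).filter P).card : ℝ) / X ^ ((5 : ℝ) / 6)) atTop (𝓝 0) := by
  have h0 : Tendsto (fun X : ℝ => 3 * (X ^ (3 : ℝ)⁻¹)⁻¹) atTop (𝓝 (3 * 0)) :=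
    ((tendsto_rpow_atTop (show (0 : ℝ) < (3 : ℝ)⁻¹ by norm_num)).inv_tendsto_atTop).const_mul 3
  rw [mul_zero] at h0
  refine squeeze_zero' ?_ ?_ h0
  · filter_upwards [eventually_ge_atTop 0] with X hX
    positivity
  · filter_upwards [eventually_ge_atTop 1] with X hX
    have hX0 : 0 < X := by linarith
    refine div_le_of_le_mul₀ (by positivity) (by positivity)
      ((card_disc_zero_le hX P hP).trans_eq ?_)
    rw [← rpow_split hX0.le]
    have : X ^ (3 : ℝ)⁻¹ ≠ 0 := by positivity
    field_simp

open Classical in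
lemma uncalibratedCount_eq {X : ℝ} (hX : 0 ≤ X) :
    (uncalibratedCount X : ℝ) = ((box X).filter IsMinimalPair).card -
      ((box X).filter fun p => IsMinimalPair p ∧ 4 * p.1 ^ 3 + 27 * p.2 ^ 2 = 0).card := by
  have hset : {p : ℤ × ℤ | ((max (|p.1| ^ 3) (p.2 ^ 2) : ℤ) : ℝ) ≤ X ∧
      4 * p.1 ^ 3 + 27 * p.2 ^ 2 ≠ 0 ∧
      ¬∃ q : ℕ, q.Prime ∧ (q : ℤ) ^ 4 ∣ p.1 ∧ (q : ℤ) ^ 6 ∣ p.2} =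
      (((box X).filter fun p => IsMinimalPair p ∧ ¬ 4 * p.1 ^ 3 + 27 * p.2 ^ 2 = 0 :
        Finset (ℤ × ℤ)) : Set (ℤ × ℤ)) := by
    ext p
    rw [Set.mem_ofPred_eq, Finset.mem_coe, Finset.mem_filter, mem_box hX]
    push_cast
    rw [max_le_iff]
    constructor
    · rintro ⟨h, hd, hm⟩
      exact ⟨⟨fun h0 => hd (by simp [h0]), h⟩, hm, hd⟩
    · rintro ⟨⟨-, h⟩, hm, hd⟩
      exact ⟨h, hd, hm⟩
  rw [uncalibratedCount, hset, Set.ncard_coe_finset, ← Finset.filter_filter,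
    ← Finset.filter_filter, eq_sub_iff_add_eq', ← Nat.cast_add,
    Finset.card_filter_add_card_filter_not]

/-- The number of isomorphism classes of elliptic curves over `ℚ` of uncalibrated height
at most `X` is asymptotic to `(4/ζ(10)) X^{5/6}`. -/
theorem uncalibratedCount_asymptotic :
    Tendsto (fun X : ℝ => (uncalibratedCount X : ℝ) / X ^ ((5 : ℝ) / 6)) atTop
      (nhds (4 / ∑' n : ℕ, 1 / ((n : ℝ) + 1) ^ 10)) := by
  classical
  have h := tendsto_card_minimal.sub
    (tendsto_card_disc_zero (fun p => IsMinimalPair p ∧ 4 * p.1 ^ 3 + 27 * p.2 ^ 2 = 0) fun _ h => h.2)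
  rw [sub_zero] at h
  refine h.congr' ?_
  filter_upwards [eventually_ge_atTop 0] with X hX
  rw [uncalibratedCount_eq hX, sub_div]
end

section
/- There exists a real constant c > 0 with the following property: for a real number X ≥ 1, let M(X) be the number of pairs of integers (a₄, a₆) such that max(4|a₄|³, 27a₆²) ≤ X, 4a₄³ + 27a₆² ≠ 0, and there is no prime p with p⁴ ∣ a₄ and p⁶ ∣ a₆. Then M(X)/X^{5/6} tends to c as X → ∞. -/
/-! Every pair `(a, b) ≠ (0, 0)` is divisible, in the weighted sense `d⁴ ∣ a`, `d⁶ ∣ b`, exactly by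
the divisors `d` of one positive integer (`exists_weighted_content`), and the pairs that are counted
are those for which this integer is `1`. Since the weighted scaling by `d` multiplies the height by
`d¹²`, Möbius inversion gives `M(X) = ∑ d, μ(d) N(X / d¹²)` (`naiveHeightCount_eq_tsum`), where
`N(Y)` counts all pairs of nonzero discriminant and height at most `Y`.

These pairs fill a box with sides `2⌊(Y/4)^{1/3}⌋ + 1` and `2⌊(Y/27)^{1/2}⌋ + 1`, apart from the
`O(Y^{1/2})` singular ones (each `b` admits at most one singular `a`), so
`N(Y) / Y^{5/6}` converges to `κ = 4 · (1/4)^{1/3} · (1/27)^{1/2}`. As a pair of nonzero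
discriminant has height at least `4`, also `N(Y) ≤ 9 Y^{5/6}` for all `Y ≥ 0`
(`card_curves_le`). Dominated convergence with the bound `9 / d¹⁰` then yields
`M(X) / X^{5/6} → κ ∑ d, μ(d) / d¹⁰`, and the last sum is positive because it is at least
`1 - ∑ d ≥ 2, 1 / d² = 2 - π² / 6`. -/

open Filter Real

/-- `M X` is the number of pairs of integers `(a₄, a₆)` with naive height
`max(4|a₄|³, 27a₆²) ≤ X`, nonzero discriminant, and no prime `p` with `p⁴ ∣ a₄` and
`p⁶ ∣ a₆` (i.e. the number of isomorphism classes of elliptic curves over `ℚ` of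
naive height at most `X`). -/
noncomputable def naiveHeightCount (X : ℝ) : ℕ :=
  Set.ncard {p : ℤ × ℤ |
    ((max (4 * |p.1| ^ 3) (27 * p.2 ^ 2) : ℤ) : ℝ) ≤ X ∧
    4 * p.1 ^ 3 + 27 * p.2 ^ 2 ≠ 0 ∧
    ¬∃ q : ℕ, q.Prime ∧ (q : ℤ) ^ 4 ∣ p.1 ∧ (q : ℤ) ^ 6 ∣ p.2}

open Topology

/-- The largest possible value of `|a₄|` for a pair of height at most `X`. -/
noncomputable def sideA (X : ℝ) : ℕ := ⌊(X / 4) ^ ((1 : ℝ) / 3)⌋₊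

/-- The largest possible value of `|a₆|` for a pair of height at most `X`. -/
noncomputable def sideB (X : ℝ) : ℕ := ⌊(X / 27) ^ ((1 : ℝ) / 2)⌋₊

/-- The pairs of integers of naive height at most `X` (for `X ≥ 0`, see `mem_heightBox`). -/
noncomputable def heightBox (X : ℝ) : Finset (ℤ × ℤ) :=
  Finset.Icc (-(sideA X : ℤ)) (sideA X) ×ˢ Finset.Icc (-(sideB X : ℤ)) (sideB X)

/-- The pairs of naive height at most `X` and nonzero discriminant, minimal or not. -/
noncomputable def curves (X : ℝ) : Finset (ℤ × ℤ) :=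
  (heightBox X).filter fun p => 4 * p.1 ^ 3 + 27 * p.2 ^ 2 ≠ 0

lemma abs_le_floor_rpow_iff (a : ℤ) {Y : ℝ} (hY : 0 ≤ Y) {n : ℕ} (hn : n ≠ 0) :
    |a| ≤ (⌊Y ^ ((1 : ℝ) / n)⌋₊ : ℤ) ↔ |(a : ℝ)| ^ n ≤ Y := by
  have h1 : |a| ≤ (⌊Y ^ ((1 : ℝ) / n)⌋₊ : ℤ) ↔ a.natAbs ≤ ⌊Y ^ ((1 : ℝ) / n)⌋₊ := by
    rw [Int.abs_eq_natAbs]; exact Nat.cast_le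
  rw [h1, Nat.le_floor_iff (by positivity), Nat.cast_natAbs, Int.cast_abs, one_div,
    Real.le_rpow_inv_iff_of_pos (abs_nonneg _) hY (by positivity), Real.rpow_natCast]

lemma mem_heightBox {X : ℝ} (hX : 0 ≤ X) (p : ℤ × ℤ) :
    p ∈ heightBox X ↔ ((max (4 * |p.1| ^ 3) (27 * p.2 ^ 2) : ℤ) : ℝ) ≤ X := by
  have h1 := abs_le_floor_rpow_iff p.1 (Y := X / 4) (by positivity) (n := 3) (by norm_num)
  have h2 := abs_le_floor_rpow_iff p.2 (Y := X / 27) (by positivity) (n := 2) (by norm_num)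
  push_cast at h1 h2
  rw [heightBox, Finset.mem_product, Finset.mem_Icc, Finset.mem_Icc, ← abs_le, ← abs_le,
    sideA, sideB, h1, h2, sq_abs]
  push_cast
  rw [max_le_iff, le_div_iff₀ (by norm_num), le_div_iff₀ (by norm_num), mul_comm (4 : ℝ),
    mul_comm (27 : ℝ)]

lemma mem_curves {X : ℝ} (hX : 0 ≤ X) (p : ℤ × ℤ) :
    p ∈ curves X ↔ ((max (4 * |p.1| ^ 3) (27 * p.2 ^ 2) : ℤ) : ℝ) ≤ X ∧
      4 * p.1 ^ 3 + 27 * p.2 ^ 2 ≠ 0 := by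
  rw [curves, Finset.mem_filter, mem_heightBox hX]

lemma card_heightBox (X : ℝ) : (heightBox X).card = (2 * sideA X + 1) * (2 * sideB X + 1) := by
  rw [heightBox, Finset.card_product, Int.card_Icc, Int.card_Icc]
  congr 1 <;> omega

/-! ### Counting pairs of nonzero discriminant -/

/-- A singular pair is determined by its second entry, cubing being injective on `ℤ`. -/
lemma card_heightBox_le (X : ℝ) :
    (heightBox X).card ≤ (curves X).card + (2 * sideB X + 1) := by
  rw [← Finset.card_filter_add_card_filter_not (s := heightBox X)
    (fun p : ℤ × ℤ => 4 * p.1 ^ 3 + 27 * p.2 ^ 2 ≠ 0)]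
  refine Nat.add_le_add le_rfl ?_
  have h : (Finset.Icc (-(sideB X : ℤ)) (sideB X)).card = 2 * sideB X + 1 := by
    rw [Int.card_Icc]; omega
  rw [← h]
  refine Finset.card_le_card_of_injOn Prod.snd ?_ ?_
  · intro p hp
    exact (Finset.mem_product.1 (Finset.mem_filter.1 hp).1).2
  · rintro ⟨a, b⟩ hp ⟨a', b'⟩ hq (rfl : b = b')
    have hp' : 4 * a ^ 3 + 27 * b ^ 2 = 0 := by simpa using (Finset.mem_filter.1 hp).2
    have hq' : 4 * a' ^ 3 + 27 * b ^ 2 = 0 := by simpa using (Finset.mem_filter.1 hq).2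
    have : a ^ 3 = a' ^ 3 := by linarith
    rw [(Odd.strictMono_pow (by decide : Odd 3)).injective this]

/-- The height is an integer, and a nonzero discriminant forces it to be at least `4`. -/
lemma curves_eq_empty {X : ℝ} (hX : 0 ≤ X) (h4 : X < 4) : curves X = ∅ := by
  refine Finset.eq_empty_of_forall_notMem fun p hp => ?_
  obtain ⟨h, hd⟩ := (mem_curves hX p).1 hp
  have h' : max (4 * |p.1| ^ 3) (27 * p.2 ^ 2) < 4 := by exact_mod_cast h.trans_lt h4
  obtain ⟨ha, hb⟩ := max_lt_iff.1 h'
  have ha0 : p.1 = 0 := by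
    by_contra h0
    have : 1 ≤ |p.1| ^ 3 := one_le_pow₀ (Int.one_le_abs h0)
    linarith
  have hb0 : p.2 = 0 := by
    by_contra h0
    have : 0 < p.2 ^ 2 := by positivity
    linarith
  simp [ha0, hb0] at hd

lemma card_curves_le {X : ℝ} (hX : 0 ≤ X) :
    ((curves X).card : ℝ) ≤ 9 * X ^ ((5 : ℝ) / 6) := by
  rcases lt_or_ge X 4 with h4 | h4
  · rw [curves_eq_empty hX h4]; simp; positivity
  have hA : (sideA X : ℝ) ≤ X ^ ((1 : ℝ) / 3) :=
    (Nat.floor_le (by positivity)).trans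
      (Real.rpow_le_rpow (by positivity) (by linarith) (by norm_num))
  have hB : (sideB X : ℝ) ≤ X ^ ((1 : ℝ) / 2) :=
    (Nat.floor_le (by positivity)).trans
      (Real.rpow_le_rpow (by positivity) (by linarith) (by norm_num))
  have h1 : 1 ≤ X ^ ((1 : ℝ) / 3) := Real.one_le_rpow (by linarith) (by norm_num)
  have h2 : 1 ≤ X ^ ((1 : ℝ) / 2) := Real.one_le_rpow (by linarith) (by norm_num)
  calc ((curves X).card : ℝ) ≤ (heightBox X).card := by
        exact_mod_cast Finset.card_filter_le _ _
    _ = (2 * sideA X + 1) * (2 * sideB X + 1) := by rw [card_heightBox]; push_cast; rfl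
    _ ≤ (3 * X ^ ((1 : ℝ) / 3)) * (3 * X ^ ((1 : ℝ) / 2)) := by
        gcongr <;> linarith
    _ = 9 * (X ^ ((1 : ℝ) / 3) * X ^ ((1 : ℝ) / 2)) := by ring
    _ = 9 * X ^ ((5 : ℝ) / 6) := by
        rw [← Real.rpow_add (by linarith)]; norm_num

lemma tendsto_floor_rpow_div {e k : ℝ} (he : 0 < e) (hk : 0 < k) :
    Tendsto (fun X : ℝ => (2 * (⌊(X / k) ^ e⌋₊ : ℝ) + 1) / X ^ e) atTop
      (𝓝 (2 * (1 / k) ^ e)) := by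
  have hx : Tendsto (fun X : ℝ => X ^ e) atTop atTop := tendsto_rpow_atTop he
  have h1 : Tendsto (fun X : ℝ => (⌊(1 / k) ^ e * X ^ e⌋₊ : ℝ) / X ^ e) atTop
      (𝓝 ((1 / k) ^ e)) :=
    (tendsto_nat_floor_mul_div_atTop (R := ℝ) (a := (1 / k) ^ e) (by positivity)).comp hx
  have h2 : Tendsto (fun X : ℝ => (X ^ e)⁻¹) atTop (𝓝 0) := tendsto_inv_atTop_zero.comp hx
  have h3 := (h1.const_mul 2).add h2
  rw [add_zero] at h3
  refine h3.congr' ?_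
  filter_upwards [eventually_gt_atTop 0] with X hX
  rw [← Real.mul_rpow (by positivity) hX.le, one_div_mul_eq_div]
  ring

/-- The limit of `N(X) / X^{5/6}`, where `N(X)` is the number of all pairs of nonzero discriminant
and height at most `X`. -/
noncomputable def boxConst : ℝ := (2 * (1 / 4) ^ ((1 : ℝ) / 3)) * (2 * (1 / 27) ^ ((1 : ℝ) / 2))

lemma boxConst_pos : 0 < boxConst := by unfold boxConst; positivity

lemma tendsto_card_curves :
    Tendsto (fun X : ℝ => ((curves X).card : ℝ) / X ^ ((5 : ℝ) / 6)) atTop (𝓝 boxConst) := by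
  have hA := tendsto_floor_rpow_div (e := 1 / 3) (k := 4) (by norm_num) (by norm_num)
  have hB := tendsto_floor_rpow_div (e := 1 / 2) (k := 27) (by norm_num) (by norm_num)
  have hX : Tendsto (fun X : ℝ => (X ^ ((1 : ℝ) / 3))⁻¹) atTop (𝓝 0) :=
    tendsto_inv_atTop_zero.comp (tendsto_rpow_atTop (by norm_num))
  have hU := hA.mul hB
  have hL := hU.sub (hX.mul hB)
  rw [zero_mul, sub_zero] at hL
  have hs : ∀ X : ℝ, 0 < X → X ^ ((5 : ℝ) / 6) = X ^ ((1 : ℝ) / 3) * X ^ ((1 : ℝ) / 2) := by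
    intro X h
    rw [← Real.rpow_add h]; norm_num
  refine tendsto_of_tendsto_of_tendsto_of_le_of_le' hL hU ?_ ?_
  · filter_upwards [eventually_gt_atTop 0] with X h
    have h1 : ((heightBox X).card : ℝ) ≤ (curves X).card + (2 * sideB X + 1) := by
      exact_mod_cast card_heightBox_le X
    rw [card_heightBox] at h1
    push_cast [sideA, sideB] at h1
    rw [hs X h, inv_mul_eq_div, div_div, div_mul_div_comm, mul_comm (X ^ ((1 : ℝ) / 2)),
      ← sub_div]
    gcongr
    linarith
  · filter_upwards [eventually_gt_atTop 0] with X h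
    have h1 : ((curves X).card : ℝ) ≤ (heightBox X).card := by
      exact_mod_cast Finset.card_filter_le _ _
    rw [card_heightBox] at h1
    push_cast [sideA, sideB] at h1
    rw [hs X h, div_mul_div_comm]
    gcongr

/-! ### Möbius inversion over the weighted content -/

/-- `d` divides the pair `p` in the weighted sense. -/
def WDvd (d : ℕ) (p : ℤ × ℤ) : Prop := (d : ℤ) ^ 4 ∣ p.1 ∧ (d : ℤ) ^ 6 ∣ p.2

lemma wDvd_iff (d : ℕ) (p : ℤ × ℤ) :
    WDvd d p ↔ d ^ 4 ∣ p.1.natAbs ∧ d ^ 6 ∣ p.2.natAbs := by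
  rw [WDvd, ← Nat.cast_pow, ← Nat.cast_pow, Int.natCast_dvd, Int.natCast_dvd]

lemma WDvd.le {d : ℕ} {p : ℤ × ℤ} (hp : p ≠ 0) (h : WDvd d p) :
    d ≤ p.1.natAbs + p.2.natAbs := by
  obtain ⟨h1, h2⟩ := (wDvd_iff d p).1 h
  by_cases h0 : p.1 = 0
  · have : p.2 ≠ 0 := fun h' => hp (Prod.ext h0 h')
    have := Nat.le_of_dvd (by omega) h2
    have := Nat.le_self_pow (n := 6) (by norm_num) d
    omega
  · have := Nat.le_of_dvd (by omega) h1
    have := Nat.le_self_pow (n := 4) (by norm_num) d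
    omega

/-- The weighted divisors of a nonzero pair form a finite set closed under `lcm`, so they are the
divisors of the largest one. -/
lemma exists_weighted_content {p : ℤ × ℤ} (hp : p ≠ 0) :
    ∃ D : ℕ, D ≠ 0 ∧ ∀ d : ℕ, WDvd d p ↔ d ∣ D := by
  classical
  have h1 : WDvd 1 p := by simp [WDvd]
  have h0 : ¬ WDvd 0 p := by
    intro h
    obtain ⟨ha, hb⟩ := h
    exact hp (Prod.ext (by simpa using ha) (by simpa using hb))
  set n := p.1.natAbs + p.2.natAbs with hn
  have hD : WDvd (Nat.findGreatest (WDvd · p) n) p :=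
    Nat.findGreatest_spec (P := (WDvd · p)) (h1.le hp) h1
  set D := Nat.findGreatest (WDvd · p) n
  have hD0 : D ≠ 0 := fun h => h0 (h ▸ hD)
  refine ⟨D, hD0, fun d => ⟨fun hd => ?_, fun hd => ?_⟩⟩
  · have hl : WDvd (D.lcm d) p := by
      rw [wDvd_iff] at hD hd ⊢
      rw [← Nat.pow_lcm_pow, ← Nat.pow_lcm_pow]
      exact ⟨Nat.lcm_dvd hD.1 hd.1, Nat.lcm_dvd hD.2 hd.2⟩
    have hle : D.lcm d ≤ D := Nat.le_findGreatest (P := (WDvd · p)) (hl.le hp) hl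
    have heq : D.lcm d = D := le_antisymm hle
      (Nat.le_of_dvd (Nat.pos_of_ne_zero fun h => h0 (h ▸ hl)) (Nat.dvd_lcm_left D d))
    exact heq ▸ Nat.dvd_lcm_right D d
  · rw [wDvd_iff] at hD ⊢
    exact ⟨(pow_dvd_pow_of_dvd hd 4).trans hD.1, (pow_dvd_pow_of_dvd hd 6).trans hD.2⟩

open Classical in
lemma sum_moebius_wDvd {p : ℤ × ℤ} (hp : p ≠ 0) {K : ℕ} (hK : p.1.natAbs + p.2.natAbs < K) :
    ∑ d ∈ Finset.range K, (if WDvd d p then ArithmeticFunction.moebius d else 0) =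
      if ∃ q : ℕ, q.Prime ∧ WDvd q p then 0 else 1 := by
  obtain ⟨D, hD0, hD⟩ := exists_weighted_content hp
  have hset : (Finset.range K).filter (WDvd · p) = D.divisors := by
    ext d
    rw [Finset.mem_filter, Nat.mem_divisors, Finset.mem_range, hD]
    refine ⟨fun h => ⟨h.2, hD0⟩, fun h => ⟨?_, h.1⟩⟩
    exact (((hD d).2 h.1).le hp).trans_lt hK
  rw [← Finset.sum_filter, hset, ← ArithmeticFunction.coe_mul_zeta_apply,
    ArithmeticFunction.moebius_mul_coe_zeta, ArithmeticFunction.one_apply]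
  simp only [hD, ← Nat.ne_one_iff_exists_prime_dvd]
  by_cases h : D = 1 <;> simp [h]

/-- Weighted scaling by `d` multiplies the height by `d¹²`. -/
lemma card_filter_wDvd [∀ d p, Decidable (WDvd d p)] {X : ℝ} (hX : 0 ≤ X) {d : ℕ} (hd : d ≠ 0) :
    ((curves X).filter (WDvd d)).card = (curves (X / (d : ℝ) ^ 12)).card := by
  have hdz : (d : ℤ) ≠ 0 := by exact_mod_cast hd
  have hd12 : (0 : ℝ) < (d : ℝ) ^ 12 := by positivity
  have key : ∀ a b : ℤ, ((d : ℤ) ^ 4 * a, (d : ℤ) ^ 6 * b) ∈ curves X ↔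
      (a, b) ∈ curves (X / (d : ℝ) ^ 12) := by
    intro a b
    rw [mem_curves hX, mem_curves (by positivity)]
    have e1 : max (4 * |(d : ℤ) ^ 4 * a| ^ 3) (27 * ((d : ℤ) ^ 6 * b) ^ 2) =
        max (4 * |a| ^ 3) (27 * b ^ 2) * (d : ℤ) ^ 12 := by
      rw [max_mul_of_nonneg _ _ (by positivity), abs_mul, abs_of_nonneg (by positivity)]
      ring_nf
    have e2 : 4 * ((d : ℤ) ^ 4 * a) ^ 3 + 27 * ((d : ℤ) ^ 6 * b) ^ 2 =
        (4 * a ^ 3 + 27 * b ^ 2) * (d : ℤ) ^ 12 := by ring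
    simp only [e1, e2]
    rw [le_div_iff₀ hd12, mul_ne_zero_iff, Int.cast_mul]
    simp [hd]
  symm
  refine Finset.card_bij (fun p _ => ((d : ℤ) ^ 4 * p.1, (d : ℤ) ^ 6 * p.2)) ?_ ?_ ?_
  · rintro ⟨a, b⟩ h
    exact Finset.mem_filter.2 ⟨(key a b).2 h, dvd_mul_right _ _, dvd_mul_right _ _⟩
  · rintro ⟨a, b⟩ - ⟨a', b'⟩ - h
    simpa [hd] using h
  · rintro ⟨x, y⟩ h
    obtain ⟨h, ⟨a, rfl⟩, ⟨b, rfl⟩⟩ := Finset.mem_filter.1 h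
    exact ⟨(a, b), (key a b).1 h, rfl⟩

lemma naiveHeightCount_eq_tsum {X : ℝ} (hX : 0 ≤ X) :
    (naiveHeightCount X : ℝ) =
      ∑' d : ℕ, (ArithmeticFunction.moebius d : ℝ) * ((curves (X / (d : ℝ) ^ 12)).card : ℝ) := by
  classical
  have hne : ∀ p ∈ curves X, p ≠ 0 := by
    rintro p hp rfl
    simpa using ((mem_curves hX _).1 hp).2
  set K := sideA X + sideB X + 1 with hK
  have hlt : ∀ p ∈ curves X, p.1.natAbs + p.2.natAbs < K := by
    intro p hp
    have := Finset.mem_product.1 (Finset.mem_filter.1 hp).1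
    simp only [Finset.mem_Icc] at this
    omega
  have hterm : ∀ d : ℕ,
      ArithmeticFunction.moebius d * (((curves X).filter (WDvd d)).card : ℤ) =
      ArithmeticFunction.moebius d * ((curves (X / (d : ℝ) ^ 12)).card : ℤ) := by
    intro d
    rcases eq_or_ne d 0 with rfl | hd
    · simp
    · rw [card_filter_wDvd hX hd]
  have hM : naiveHeightCount X =
      ((curves X).filter fun p => ¬ ∃ q : ℕ, q.Prime ∧ WDvd q p).card := by
    rw [naiveHeightCount, ← Set.ncard_coe_finset]
    congr 1
    ext p
    rw [Set.mem_ofPred_eq, Finset.mem_coe, Finset.mem_filter, mem_curves hX, and_assoc]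
    rfl
  have hsum : (naiveHeightCount X : ℤ) = ∑ d ∈ Finset.range K,
      ArithmeticFunction.moebius d * ((curves (X / (d : ℝ) ^ 12)).card : ℤ) := by
    calc (naiveHeightCount X : ℤ)
        = ∑ p ∈ curves X, if ∃ q : ℕ, q.Prime ∧ WDvd q p then (0 : ℤ) else 1 := by
          rw [hM, Finset.card_filter]
          push_cast
          exact Finset.sum_congr rfl fun p _ => by split_ifs <;> simp_all
      _ = ∑ p ∈ curves X, ∑ d ∈ Finset.range K,
            (if WDvd d p then ArithmeticFunction.moebius d else 0) :=
          Finset.sum_congr rfl fun p hp => (sum_moebius_wDvd (hne p hp) (hlt p hp)).symm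
      _ = ∑ d ∈ Finset.range K,
            ArithmeticFunction.moebius d * (((curves X).filter (WDvd d)).card : ℤ) := by
          rw [Finset.sum_comm]
          refine Finset.sum_congr rfl fun d _ => ?_
          rw [← Finset.sum_filter, Finset.sum_const, nsmul_eq_mul, mul_comm]
      _ = _ := Finset.sum_congr rfl fun d _ => hterm d
  rw [tsum_eq_sum (s := Finset.range K)]
  · exact_mod_cast hsum
  · intro d hd
    have hd0 : d ≠ 0 := by rintro rfl; simp [hK] at hd
    rw [← card_filter_wDvd hX hd0, Finset.filter_eq_empty_iff.2]
    · simp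
    · intro p hp h
      exact hd (Finset.mem_range.2 ((h.le (hne p hp)).trans_lt (hlt p hp)))

/-! ### The limit -/

lemma abs_moebius_le_one_real (d : ℕ) : |(ArithmeticFunction.moebius d : ℝ)| ≤ 1 := by
  exact_mod_cast ArithmeticFunction.abs_moebius_le_one (n := d)

/-- The sum is `1 / ζ(10)`, but only its positivity matters: the terms with `d ≥ 2` contribute at
least `-∑ d ≥ 2, 1 / d² = 1 - π² / 6 > -1`. -/
lemma tsum_moebius_pos : 0 < ∑' d : ℕ, (ArithmeticFunction.moebius d : ℝ) * (1 / (d : ℝ) ^ 10) := by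
  have hs10 : Summable fun d : ℕ => 1 / (d : ℝ) ^ 10 :=
    Real.summable_one_div_nat_pow.2 (by norm_num)
  have hs : Summable fun d : ℕ => (ArithmeticFunction.moebius d : ℝ) * (1 / (d : ℝ) ^ 10) := by
    refine Summable.of_norm_bounded hs10 fun d => ?_
    rw [norm_mul, Real.norm_eq_abs, Real.norm_of_nonneg (by positivity)]
    exact mul_le_of_le_one_left (by positivity) (abs_moebius_le_one_real d)
  have hadd := hs.hasSum.add hasSum_zeta_two
  have h1 := le_hasSum hadd 1 fun d _ => by
    rcases Nat.eq_zero_or_pos d with rfl | hd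
    · simp
    have hd1 : (1 : ℝ) ≤ d := by exact_mod_cast hd
    have hle : 1 / (d : ℝ) ^ 10 ≤ 1 / (d : ℝ) ^ 2 :=
      one_div_le_one_div_of_le (by positivity) (pow_le_pow_right₀ hd1 (by norm_num))
    have hmu := (abs_le.1 (abs_moebius_le_one_real d)).1
    have h0 : 0 ≤ 1 / (d : ℝ) ^ 10 := by positivity
    nlinarith
  simp only [ArithmeticFunction.moebius_apply_one, Nat.cast_one, Int.cast_one, one_pow] at h1
  have hpi : π ^ 2 < 12 := by nlinarith [Real.pi_lt_d2, Real.pi_pos]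
  linarith

lemma div_pow_rpow {X : ℝ} (hX : 0 ≤ X) (d : ℕ) :
    (X / (d : ℝ) ^ 12) ^ ((5 : ℝ) / 6) = X ^ ((5 : ℝ) / 6) / (d : ℝ) ^ 10 := by
  rw [Real.div_rpow hX (by positivity), ← Real.rpow_natCast (d : ℝ) 12, ← Real.rpow_mul
    (Nat.cast_nonneg d), ← Real.rpow_natCast (d : ℝ) 10]
  norm_num

/-- The number of isomorphism classes of elliptic curves over `ℚ` of naive height at
most `X` is asymptotic to `c·X^{5/6}` for some positive constant `c`. -/
theorem naiveHeightCount_asymptotic :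
    ∃ c : ℝ, 0 < c ∧
      Tendsto (fun X : ℝ => (naiveHeightCount X : ℝ) / X ^ ((5 : ℝ) / 6)) atTop
        (nhds c) := by
  refine ⟨∑' d : ℕ, (ArithmeticFunction.moebius d : ℝ) * (1 / (d : ℝ) ^ 10) * boxConst, ?_, ?_⟩
  · rw [tsum_mul_right]
    exact mul_pos tsum_moebius_pos boxConst_pos
  have hlim : Tendsto (fun X : ℝ => ∑' d : ℕ, (ArithmeticFunction.moebius d : ℝ) *
      ((curves (X / (d : ℝ) ^ 12)).card : ℝ) / X ^ ((5 : ℝ) / 6)) atTop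
      (𝓝 (∑' d : ℕ, (ArithmeticFunction.moebius d : ℝ) * (1 / (d : ℝ) ^ 10) * boxConst)) := by
    refine tendsto_tsum_of_dominated_convergence (bound := fun d : ℕ => 9 * (1 / (d : ℝ) ^ 10))
      ((Real.summable_one_div_nat_pow.2 (by norm_num)).mul_left 9) ?_ ?_
    · intro d
      rcases Nat.eq_zero_or_pos d with rfl | hd
      · simp
      have hd12 : (0 : ℝ) < (d : ℝ) ^ 12 := by positivity
      have h := (tendsto_card_curves.comp (tendsto_id.atTop_div_const hd12)).const_mul
        ((ArithmeticFunction.moebius d : ℝ) * (1 / (d : ℝ) ^ 10))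
      refine h.congr' ?_
      filter_upwards [eventually_gt_atTop 0] with X hX
      simp only [Function.comp_apply, id]
      rw [div_pow_rpow hX.le]
      have : X ^ ((5 : ℝ) / 6) ≠ 0 := by positivity
      field_simp
    · filter_upwards [eventually_gt_atTop 0] with X hX d
      have hc := card_curves_le (X := X / (d : ℝ) ^ 12) (by positivity)
      rw [div_pow_rpow hX.le] at hc
      rw [norm_div, norm_mul, Real.norm_eq_abs, Real.norm_of_nonneg (Nat.cast_nonneg _),
        Real.norm_of_nonneg (by positivity), div_le_iff₀ (by positivity)]
      calc |(ArithmeticFunction.moebius d : ℝ)| * ((curves (X / (d : ℝ) ^ 12)).card : ℝ)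
          ≤ (curves (X / (d : ℝ) ^ 12)).card :=
            mul_le_of_le_one_left (by positivity) (abs_moebius_le_one_real d)
        _ ≤ 9 * (X ^ ((5 : ℝ) / 6) / (d : ℝ) ^ 10) := hc
        _ = 9 * (1 / (d : ℝ) ^ 10) * X ^ ((5 : ℝ) / 6) := by ring
  refine hlim.congr' ?_
  filter_upwards [eventually_ge_atTop 0] with X hX
  rw [naiveHeightCount_eq_tsum hX, tsum_div_const]
end
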